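/- Let s(x,y) be a score function and let q̂ be the ⌈(N+1)(1−α)⌉/N empirical quantile of scores s₁,…,s_N computed on N i.i.d. (exchangeable) calibration points (X₁,Y₁),…,(X_N,Y_N). If (X_test, Y_test) is exchangeable with the calibration data, then Pr(Y_test ∈ C(X_test)) ≥ 1−α, where C(x) = {y : s(x,y) ≤ q̂}. -/

import Mathlib

open MeasureTheory ProbabilityTheory

/-!
Sort the scores of all `N + 1` points together. At least `k` of these points have a score at most
the `k`-th smallest one and, by exchangeability, each point is equally likely to be among them, so
the test point is with probability at least `k / (N + 1)`. On that event the test score is also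
at most the `k`-th smallest calibration score, because the condition that `x` is at most the
`k`-th smallest entry of `v` only says that fewer than `k` entries of `v` are strictly below `x`,
and the test score is not strictly below itself.
-/

open scoped Finset ENNReal

section OrderStatistic

variable {β : Type*} [LinearOrder β] {n : ℕ}

/-- The `j`-th order statistic of the tuple `v`, i.e. its `j`-th smallest entry counted with
multiplicity. The index starts at `0`, so the `k`-th smallest value of the literature is
`orderStatistic v ⟨k - 1, _⟩`. -/
def orderStatistic (v : Fin n → β) (j : Fin n) : β :=
  v (Tuple.sort v j)

lemma monotone_orderStatistic (v : Fin n → β) : Monotone (orderStatistic v) :=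
  Tuple.monotone_sort v

lemma orderStatistic_comp_perm (v : Fin n → β) (π : Equiv.Perm (Fin n)) :
    orderStatistic (v ∘ π) = orderStatistic v :=
  Tuple.comp_perm_comp_sort_eq_comp_sort

lemma le_orderStatistic_iff {v : Fin n → β} {j : Fin n} {x : β} :
    x ≤ orderStatistic v j ↔ #{i | v i < x} ≤ (j : ℕ) := by
  have card_eq : #{i | orderStatistic v i < x} = #{i | v i < x} := by
    refine Finset.card_equiv (Tuple.sort v) fun i => ?_
    simp only [Finset.mem_filter_univ]
    rfl
  rw [← not_lt, ← Tuple.lt_card_lt_iff_apply_lt_of_monotone (monotone_orderStatistic v),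
    card_eq, not_lt]

lemma succ_le_card_le_orderStatistic (v : Fin n → β) (j : Fin n) :
    (j : ℕ) + 1 ≤ #{i | v i ≤ orderStatistic v j} :=
  calc (j : ℕ) + 1 = #(Finset.Iic j) := (Fin.card_Iic j).symm
    _ ≤ #{i | v i ≤ orderStatistic v j} :=
      Finset.card_le_card_of_injOn (Tuple.sort v)
        (fun _ hm => Finset.mem_filter_univ _ |>.2 <|
          monotone_orderStatistic v (Finset.mem_Iic.1 hm))
        (Tuple.sort v).injective.injOn

lemma last_le_orderStatistic_castSucc_iff {v : Fin (n + 1) → β} {j : Fin n} :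
    v (Fin.last n) ≤ orderStatistic (fun i : Fin n => v i.castSucc) j ↔
      v (Fin.last n) ≤ orderStatistic v j.castSucc := by
  have card_eq : #{i : Fin n | v i.castSucc < v (Fin.last n)} = #{i | v i < v (Fin.last n)} := by
    simp only [Finset.card_filter, Fin.sum_univ_castSucc, lt_irrefl, if_false, add_zero]
  rw [le_orderStatistic_iff, le_orderStatistic_iff, card_eq, Fin.val_castSucc]

lemma measurableSet_le_orderStatistic [TopologicalSpace β] [OrderClosedTopology β]
    [SecondCountableTopology β] [MeasurableSpace β] [OpensMeasurableSpace β] (a j : Fin n) :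
    MeasurableSet {v : Fin n → β | v a ≤ orderStatistic v j} := by
  have measurable_card : Measurable fun v : Fin n → β => #{i | v i < v a} := by
    simp only [Finset.card_filter]
    exact Finset.measurable_sum _ fun i _ => Measurable.ite
      (measurableSet_lt (measurable_pi_apply i) (measurable_pi_apply a))
      measurable_const measurable_const
  simp only [le_orderStatistic_iff]
  exact measurable_card measurableSet_Iic

end OrderStatistic

section Exchangeable

variable {Ω ι E F : Type*} [MeasurableSpace Ω] [MeasurableSpace E] [MeasurableSpace F]
  {μ : Measure Ω}

/-- A family of random variables is exchangeable if its joint law is invariant under permutations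
of the index set. Phrasing this through `IdentDistrib` makes joint a.e.-measurability part of the
definition, since `Measure.map` is `0` for functions that are not a.e.-measurable. -/
def Exchangeable (X : ι → Ω → E) (μ : Measure Ω) : Prop :=
  ∀ π : Equiv.Perm ι, IdentDistrib (fun ω i => X (π i) ω) (fun ω i => X i ω) μ μ

namespace Exchangeable

lemma of_map_eq [Countable ι] {X : ι → Ω → E} (hX : ∀ i, AEMeasurable (X i) μ)
    (hmap : ∀ π : Equiv.Perm ι,
      μ.map (fun ω i => X (π i) ω) = μ.map (fun ω i => X i ω)) :
    Exchangeable X μ := fun π =>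
  ⟨aemeasurable_pi_lambda _ fun i => hX (π i), aemeasurable_pi_lambda _ hX, hmap π⟩

lemma aemeasurable {X : ι → Ω → E} (hX : Exchangeable X μ) :
    AEMeasurable (fun ω i => X i ω) μ :=
  (hX 1).aemeasurable_snd

lemma comp {X : ι → Ω → E} (hX : Exchangeable X μ) {f : E → F} (hf : Measurable f) :
    Exchangeable (fun i ω => f (X i ω)) μ := fun π =>
  (hX π).comp (measurable_pi_lambda _ fun i => hf.comp (measurable_pi_apply i))

end Exchangeable

end Exchangeable

lemma natCast_mul_measure_univ_le_sum_measure {Ω ι : Type*} [MeasurableSpace Ω] {μ : Measure Ω}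
    [Fintype ι] {p : ι → Ω → Prop} [∀ ω, DecidablePred (p · ω)]
    (hp : ∀ i, NullMeasurableSet {ω | p i ω} μ) {k : ℕ} (hk : ∀ᵐ ω ∂μ, k ≤ #{i | p i ω}) :
    k * μ Set.univ ≤ ∑ i, μ {ω | p i ω} :=
  calc k * μ Set.univ = ∫⁻ _, (k : ℝ≥0∞) ∂μ := (lintegral_const _).symm
    _ ≤ ∫⁻ ω, ∑ i, {ω | p i ω}.indicator 1 ω ∂μ := by
      refine lintegral_mono_ae (hk.mono fun ω hω => ?_)
      simpa [Set.indicator_apply] using hω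
    _ = ∑ i, ∫⁻ ω, {ω | p i ω}.indicator 1 ω ∂μ :=
      lintegral_finsetSum' _ fun i _ => aemeasurable_one.indicator₀ (hp i)
    _ = ∑ i, μ {ω | p i ω} := Finset.sum_congr rfl fun i _ => lintegral_indicator_one₀ (hp i)

section Coverage

variable {Ω β : Type*} [MeasurableSpace Ω] {μ : Measure Ω}
  [LinearOrder β] [TopologicalSpace β] [OrderClosedTopology β] [SecondCountableTopology β]
  [MeasurableSpace β] [OpensMeasurableSpace β]

namespace Exchangeable

variable {n : ℕ} {S : Fin n → Ω → β}

lemma measure_le_orderStatistic_eq (hS : Exchangeable S μ) (a b j : Fin n) :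
    μ {ω | S a ω ≤ orderStatistic (S · ω) j} = μ {ω | S b ω ≤ orderStatistic (S · ω) j} := by
  have orderStatistic_swap (ω : Ω) :
      orderStatistic (fun i => S (Equiv.swap b a i) ω) j = orderStatistic (S · ω) j :=
    congrFun (orderStatistic_comp_perm (S · ω) (Equiv.swap b a)) j
  simpa [Set.preimage, orderStatistic_swap] using
    (hS (Equiv.swap b a)).measure_mem_eq (measurableSet_le_orderStatistic b j)

lemma succ_mul_measure_univ_le_mul_measure_le_orderStatistic
    (hS : Exchangeable S μ) (a j : Fin n) :
    ((j + 1 : ℕ) : ℝ≥0∞) * μ Set.univ ≤ n * μ {ω | S a ω ≤ orderStatistic (S · ω) j} :=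
  calc ((j + 1 : ℕ) : ℝ≥0∞) * μ Set.univ
      ≤ ∑ b, μ {ω | S b ω ≤ orderStatistic (S · ω) j} :=
        natCast_mul_measure_univ_le_sum_measure
          (fun b => hS.aemeasurable.nullMeasurableSet_preimage
            (measurableSet_le_orderStatistic b j))
          (.of_forall fun ω => succ_le_card_le_orderStatistic (S · ω) j)
    _ = n * μ {ω | S a ω ≤ orderStatistic (S · ω) j} := by
        simp [hS.measure_le_orderStatistic_eq _ a j]

end Exchangeable

theorem conformal_coverage_lower_bound_general [IsProbabilityMeasure μ] {N : ℕ}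
    {S : Fin (N + 1) → Ω → β} (hS : Exchangeable S μ) {α : ℝ} {j : Fin N}
    (hj : ((N : ℝ) + 1) * (1 - α) ≤ j + 1) :
    ENNReal.ofReal (1 - α) ≤
      μ {ω | S (Fin.last N) ω ≤ orderStatistic (fun i : Fin N => S i.castSucc ω) j} := by
  have rank_bound : ((j + 1 : ℕ) : ℝ≥0∞) ≤
      (N + 1 : ℕ) * μ {ω | S (Fin.last N) ω ≤ orderStatistic (S · ω) j.castSucc} := by
    simpa using hS.succ_mul_measure_univ_le_mul_measure_le_orderStatistic
      (Fin.last N) j.castSucc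
  simp only [fun ω => last_le_orderStatistic_castSucc_iff (v := (S · ω)) (j := j)]
  calc ENNReal.ofReal (1 - α) ≤ ENNReal.ofReal (((j + 1 : ℕ) : ℝ) / (N + 1 : ℕ)) := by
        refine ENNReal.ofReal_le_ofReal ((le_div_iff₀' (by positivity)).2 ?_)
        exact_mod_cast hj
    _ = ((j + 1 : ℕ) : ℝ≥0∞) / (N + 1 : ℕ) := by
        rw [ENNReal.ofReal_div_of_pos (by positivity), ENNReal.ofReal_natCast,
          ENNReal.ofReal_natCast]
    _ ≤ μ {ω | S (Fin.last N) ω ≤ orderStatistic (S · ω) j.castSucc} :=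
        ENNReal.div_le_of_le_mul' rank_bound

end Coverage

/-- **Conformal coverage guarantee (lower bound).** -/
theorem conformal_coverage_lower_bound
    {Ω 𝒳 𝒴 : Type*} [MeasureSpace Ω] [IsProbabilityMeasure (ℙ : Measure Ω)]
    [MeasurableSpace 𝒳] [MeasurableSpace 𝒴]
    (N : ℕ) (hN : 0 < N)
    (X : Fin (N + 1) → Ω → 𝒳) (Y : Fin (N + 1) → Ω → 𝒴)
    (hX : ∀ i, Measurable (X i)) (hY : ∀ i, Measurable (Y i))
    (s : 𝒳 → 𝒴 → ℝ) (hs : Measurable (fun p : 𝒳 × 𝒴 => s p.1 p.2))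
    -- exchangeability of the N+1 data points (e.g. i.i.d.)
    (hexch : ∀ π : Equiv.Perm (Fin (N + 1)),
      Measure.map (fun ω i => (X (π i) ω, Y (π i) ω)) (ℙ : Measure Ω)
        = Measure.map (fun ω i => (X i ω, Y i ω)) (ℙ : Measure Ω))
    (α : ℝ) (hα : α ∈ Set.Ioo (0 : ℝ) 1)
    (k : ℕ) (hk : (k : ℤ) = ⌈((N : ℝ) + 1) * (1 - α)⌉)
    (hk1 : 1 ≤ k) (hkN : k ≤ N)
    -- qhat is the ⌈(N+1)(1-α)⌉-th smallest calibration score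
    (qhat : Ω → ℝ)
    (hq : ∀ ω, qhat ω =
      (fun i : Fin N => s (X i.castSucc ω) (Y i.castSucc ω))
        (Tuple.sort (fun i : Fin N => s (X i.castSucc ω) (Y i.castSucc ω))
          ⟨k - 1, by omega⟩)) :
    ENNReal.ofReal (1 - α)
      ≤ (ℙ : Measure Ω) {ω | s (X (Fin.last N) ω) (Y (Fin.last N) ω) ≤ qhat ω} := by
  have hk_le : ((N : ℝ) + 1) * (1 - α) ≤ ((k - 1 : ℕ) : ℝ) + 1 := by
    rw [Nat.cast_pred hk1, sub_add_cancel]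
    exact_mod_cast Int.ceil_le.1 hk.ge
  have hZ := Exchangeable.of_map_eq (fun i => ((hX i).prodMk (hY i)).aemeasurable) hexch
  simpa only [hq, orderStatistic] using
    conformal_coverage_lower_bound_general (hZ.comp hs) (j := ⟨k - 1, by omega⟩) hk_le
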